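/- arXiv:2605.15679 — 2 statements merged into one kernel-verified Lean document; each statement's English description precedes it below -/
import Mathlib

section
/- Let n be a natural number, λ : Fin n → ℝ, and let U, Ũ : ℝⁿ → ℝ be twice continuously differentiable functions satisfying ∂ᵢŨ(x) = λᵢ · ∂ᵢU(x) for all x ∈ ℝⁿ and all indices i. Then for any two indices i, j with λᵢ ≠ λⱼ, the mixed second partial derivatives vanish identically: (∂²U/∂xᵢ∂xⱼ)(x) = 0 and (∂²Ũ/∂xᵢ∂xⱼ)(x) = 0 for all x ∈ ℝⁿ. -/
/-- Partial derivative of `f` at `x` in the direction of the `i`-th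
standard basis vector. -/
noncomputable def pd {n : ℕ} (f : EuclideanSpace ℝ (Fin n) → ℝ) (i : Fin n)
    (x : EuclideanSpace ℝ (Fin n)) : ℝ :=
  fderiv ℝ f x (EuclideanSpace.single i 1)

open scoped Topology ContDiff

section IteratedDirectionalDerivative

variable {𝕜 E F : Type*} [NontriviallyNormedField 𝕜]
  [NormedAddCommGroup E] [NormedSpace 𝕜 E] [NormedAddCommGroup F] [NormedSpace 𝕜 F]
  {f g : E → F} {x : E} {k : ℕ∞ω}

theorem fderiv_fderiv_apply_const (hf : DifferentiableAt 𝕜 (fderiv 𝕜 f) x) (v w : E) :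
    fderiv 𝕜 (fun y ↦ fderiv 𝕜 f y w) x v = fderiv 𝕜 (fderiv 𝕜 f) x v w := by
  simp [fderiv_clm_apply hf (differentiableAt_const w)]

theorem fderiv_fderiv_apply_comm (hf : ContDiffAt 𝕜 k f x) (hk : minSmoothness 𝕜 2 ≤ k)
    (v w : E) :
    fderiv 𝕜 (fun y ↦ fderiv 𝕜 f y w) x v = fderiv 𝕜 (fun y ↦ fderiv 𝕜 f y v) x w := by
  have hf' : DifferentiableAt 𝕜 (fderiv 𝕜 f) x :=
    (hf.fderiv_right (m := 1) (le_minSmoothness.trans hk)).differentiableAt one_ne_zero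
  rw [fderiv_fderiv_apply_const hf', fderiv_fderiv_apply_const hf']
  exact hf.isSymmSndFDerivAt hk v w

theorem fderiv_eq_smul_of_eventuallyEq {c : 𝕜} (h : g =ᶠ[𝓝 x] c • f) :
    fderiv 𝕜 g x = c • fderiv 𝕜 f x := by
  rw [h.fderiv_eq, fderiv_const_smul_field, Pi.smul_apply]

/- Symmetry of both second derivatives gives `a • D = b • D` for the mixed derivative `D` of `f`
along `v` and `w`. -/
theorem stmt_8_general (hf : ContDiffAt 𝕜 k f x) (hg : ContDiffAt 𝕜 k g x)
    (hk : minSmoothness 𝕜 2 ≤ k) {v w : E} {a b : 𝕜} (hab : a ≠ b)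
    (hv : ∀ᶠ y in 𝓝 x, fderiv 𝕜 g y v = a • fderiv 𝕜 f y v)
    (hw : ∀ᶠ y in 𝓝 x, fderiv 𝕜 g y w = b • fderiv 𝕜 f y w) :
    fderiv 𝕜 (fun y ↦ fderiv 𝕜 f y w) x v = 0 ∧
      fderiv 𝕜 (fun y ↦ fderiv 𝕜 g y w) x v = 0 := by
  have hgw : fderiv 𝕜 (fun y ↦ fderiv 𝕜 g y w) x v =
      b • fderiv 𝕜 (fun y ↦ fderiv 𝕜 f y w) x v :=
    DFunLike.congr_fun (fderiv_eq_smul_of_eventuallyEq hw) v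
  have hgv : fderiv 𝕜 (fun y ↦ fderiv 𝕜 g y v) x w =
      a • fderiv 𝕜 (fun y ↦ fderiv 𝕜 f y v) x w :=
    DFunLike.congr_fun (fderiv_eq_smul_of_eventuallyEq hv) w
  have hsmul : a • fderiv 𝕜 (fun y ↦ fderiv 𝕜 f y w) x v =
      b • fderiv 𝕜 (fun y ↦ fderiv 𝕜 f y w) x v := by
    rw [← hgw, fderiv_fderiv_apply_comm hg hk, hgv, fderiv_fderiv_apply_comm hf hk]
  have hfw : fderiv 𝕜 (fun y ↦ fderiv 𝕜 f y w) x v = 0 := by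
    by_contra hne
    exact hab (smul_left_injective 𝕜 hne hsmul)
  exact ⟨hfw, by rw [hgw, hfw, smul_zero]⟩

end IteratedDirectionalDerivative

theorem stmt_8 (n : ℕ) (lam : Fin n → ℝ)
    (U Ut : EuclideanSpace ℝ (Fin n) → ℝ)
    (hU : ContDiff ℝ 2 U) (hUt : ContDiff ℝ 2 Ut)
    (hpd : ∀ (x : EuclideanSpace ℝ (Fin n)) (i : Fin n),
      pd Ut i x = lam i * pd U i x) :
    ∀ i j : Fin n, lam i ≠ lam j →
      ∀ x : EuclideanSpace ℝ (Fin n),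
        pd (pd U j) i x = 0 ∧ pd (pd Ut j) i x = 0 := by
  intro i j hij x
  exact stmt_8_general hU.contDiffAt hUt.contDiffAt minSmoothness_of_isRCLikeNormedField.le hij
    (.of_forall (hpd · i)) (.of_forall (hpd · j))
end

section
/- Let n be a natural number, S a subset of Fin n, μ₁ ≠ μ₂ real numbers, and define λ : Fin n → ℝ by λᵢ = μ₁ if i ∈ S and λᵢ = μ₂ otherwise. Let U, Ũ : ℝⁿ → ℝ be twice continuously differentiable with ∂ᵢŨ(x) = λᵢ · ∂ᵢU(x) for all x ∈ ℝⁿ and all i. Then there exist functions H₁, H₂ : ℝⁿ → ℝ and a constant C ∈ ℝ such that: H₁(x) depends only on the coordinates xᵢ with i ∈ S (i.e. H₁(x) = H₁(y) whenever xᵢ = yᵢ for all i ∈ S), H₂(x) depends only on the coordinates xᵢ with i ∉ S, and for all x ∈ ℝⁿ, U(x) = H₁(x) + H₂(x) and Ũ(x) = μ₁·H₁(x) + μ₂·H₂(x) + C. -/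
/-!
Along the directions `i ∉ S` the derivative of `Ut` is `μ₂` times that of `U`, so `Ut - μ₂ • U` has
vanishing derivative there and depends only on the coordinates in `S`; symmetrically, `Ut - μ₁ • U`
depends only on the coordinates outside `S`. As `μ₁ ≠ μ₂`, both `U` and `Ut` are linear
combinations of these two functions.
-/

section NormedSpace

variable {𝕜 E F : Type*} [RCLike 𝕜] [NormedAddCommGroup E] [NormedSpace 𝕜 E]
  [NormedAddCommGroup F] [NormedSpace 𝕜 F]

theorem eq_of_fderiv_apply_sub_eq_zero {f : E → F} (hf : Differentiable 𝕜 f) {x y : E}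
    (h : ∀ z, fderiv 𝕜 f z (y - x) = 0) : f x = f y := by
  have hline (t : 𝕜) : HasDerivAt (f ∘ AffineMap.lineMap x y) 0 t :=
    h (AffineMap.lineMap x y t) ▸
      (hf _).hasFDerivAt.comp_hasDerivAt t AffineMap.hasDerivAt_lineMap
  simpa using is_const_of_deriv_eq_zero (fun t ↦ (hline t).differentiableAt)
    (fun t ↦ (hline t).deriv) 0 1

variable {ι : Type*} (b : Module.Basis ι 𝕜 E)

theorem eq_of_forall_repr_eq_or_fderiv_basis_eq_zero {f : E → F} (hf : Differentiable 𝕜 f)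
    {x y : E} (h : ∀ i, b.repr x i = b.repr y i ∨ ∀ z, fderiv 𝕜 f z (b i) = 0) : f x = f y := by
  refine eq_of_fderiv_apply_sub_eq_zero hf fun z ↦ ?_
  rw [← b.linearCombination_repr (y - x), Finsupp.linearCombination_apply, Finsupp.sum, map_sum]
  refine Finset.sum_eq_zero fun i _ ↦ ?_
  rw [map_smul]
  rcases h i with hcoord | hderiv
  · simp [hcoord]
  · simp [hderiv]

theorem sub_smul_eq_of_forall_repr_eq_or_fderiv_basis_eq_smul {f g : E → F}
    (hf : Differentiable 𝕜 f) (hg : Differentiable 𝕜 g) (μ : 𝕜) {x y : E}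
    (h : ∀ i, b.repr x i = b.repr y i ∨ ∀ z, fderiv 𝕜 g z (b i) = μ • fderiv 𝕜 f z (b i)) :
    g x - μ • f x = g y - μ • f y := by
  refine eq_of_forall_repr_eq_or_fderiv_basis_eq_zero b (f := fun z ↦ g z - μ • f z)
    (hg.sub (hf.const_smul μ)) fun i ↦ (h i).imp_right fun hderiv z ↦ ?_
  have hfderiv := (hg z).hasFDerivAt.fun_sub ((hf z).hasFDerivAt.fun_const_smul μ)
  simp [hfderiv.fderiv, hderiv]

theorem stmt_10_general (S : Set ι) {μ₁ μ₂ : 𝕜} (hμ : μ₁ ≠ μ₂) {U Ut : E → F}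
    (hU : Differentiable 𝕜 U) (hUt : Differentiable 𝕜 Ut)
    (hS : ∀ i ∈ S, ∀ x, fderiv 𝕜 Ut x (b i) = μ₁ • fderiv 𝕜 U x (b i))
    (hSc : ∀ i ∉ S, ∀ x, fderiv 𝕜 Ut x (b i) = μ₂ • fderiv 𝕜 U x (b i)) :
    ∃ H₁ H₂ : E → F,
      (∀ x y, (∀ i ∈ S, b.repr x i = b.repr y i) → H₁ x = H₁ y) ∧
      (∀ x y, (∀ i ∉ S, b.repr x i = b.repr y i) → H₂ x = H₂ y) ∧
      ∀ x, U x = H₁ x + H₂ x ∧ Ut x = μ₁ • H₁ x + μ₂ • H₂ x := by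
  have h₁₂ : μ₁ - μ₂ ≠ 0 := sub_ne_zero.mpr hμ
  refine ⟨fun x ↦ (μ₁ - μ₂)⁻¹ • (Ut x - μ₂ • U x), fun x ↦ -(μ₁ - μ₂)⁻¹ • (Ut x - μ₁ • U x),
    fun x y hxy ↦ ?_, fun x y hxy ↦ ?_, fun x ↦ ⟨?_, ?_⟩⟩
  · exact congrArg _ <| sub_smul_eq_of_forall_repr_eq_or_fderiv_basis_eq_smul b hU hUt μ₂
      fun i ↦ (em (i ∈ S)).imp (hxy i) (hSc i)
  · exact congrArg _ <| sub_smul_eq_of_forall_repr_eq_or_fderiv_basis_eq_smul b hU hUt μ₁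
      fun i ↦ (em (i ∈ S)).symm.imp (hxy i) (hS i)
  all_goals match_scalars <;> field_simp <;> ring

end NormedSpace

open Classical in
theorem stmt_10 (n : ℕ) (S : Set (Fin n)) (μ₁ μ₂ : ℝ) (hμ : μ₁ ≠ μ₂)
    (lam : Fin n → ℝ) (hlam : ∀ i, lam i = if i ∈ S then μ₁ else μ₂)
    (U Ut : EuclideanSpace ℝ (Fin n) → ℝ)
    (hU : ContDiff ℝ 2 U) (hUt : ContDiff ℝ 2 Ut)
    (hpd : ∀ (x : EuclideanSpace ℝ (Fin n)) (i : Fin n),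
      pd Ut i x = lam i * pd U i x) :
    ∃ (H₁ H₂ : EuclideanSpace ℝ (Fin n) → ℝ) (C : ℝ),
      (∀ x y : EuclideanSpace ℝ (Fin n), (∀ i ∈ S, x i = y i) → H₁ x = H₁ y) ∧
      (∀ x y : EuclideanSpace ℝ (Fin n), (∀ i ∉ S, x i = y i) → H₂ x = H₂ y) ∧
      (∀ x : EuclideanSpace ℝ (Fin n),
        U x = H₁ x + H₂ x ∧ Ut x = μ₁ * H₁ x + μ₂ * H₂ x + C) := by
  obtain ⟨H₁, H₂, hH₁, hH₂, hsum⟩ := stmt_10_general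
    (EuclideanSpace.basisFun (Fin n) ℝ).toBasis S hμ
    (hU.differentiable two_ne_zero) (hUt.differentiable two_ne_zero)
    (fun i hi x ↦ by simpa [pd, hlam, hi] using hpd x i)
    (fun i hi x ↦ by simpa [pd, hlam, hi] using hpd x i)
  exact ⟨H₁, H₂, 0, by simpa using hH₁, by simpa using hH₂, by simpa using hsum⟩
end
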